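/- Let X ∈ ℝ^{m×n} be a matrix, let I ⊆ {1,…,m} and J ⊆ {1,…,n} be index sets, and set C = X(:,J) (the submatrix of X consisting of the columns indexed by J), U = X(I,J) (the submatrix with rows indexed by I and columns indexed by J), and R = X(I,:) (the submatrix consisting of the rows indexed by I). If rank(U) = rank(X), then X = C U† R, where U† is the Moore–Penrose pseudoinverse of U; that is, for every matrix Y satisfying the Penrose conditions for U, one has X = C Y R. -/

import Mathlib

open Matrix

/-- `Y` satisfies the four Penrose conditions for `U`, i.e. `Y` is a
Moore–Penrose pseudoinverse of `U`. -/
def IsMoorePenrose {p q : Type*} [Fintype p] [Fintype q]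
    (U : Matrix p q ℝ) (Y : Matrix q p ℝ) : Prop :=
  U * Y * U = U ∧ Y * U * Y = Y ∧ (U * Y)ᵀ = U * Y ∧ (Y * U)ᵀ = Y * U

lemma exists_right_factor {a b c : Type*} [Fintype a] [Fintype b] [Fintype c] [DecidableEq b]
    (A : Matrix a b ℝ) (B : Matrix b c ℝ) (h : A.rank ≤ (A * B).rank) :
    ∃ W : Matrix c b ℝ, A = A * B * W := by
  have hle : LinearMap.range (A * B).mulVecLin ≤ LinearMap.range A.mulVecLin := by
    rw [Matrix.mulVecLin_mul]
    exact LinearMap.range_comp_le_range _ _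
  have heq := Submodule.eq_of_le_of_finrank_le hle h
  have hx : ∀ j : b, ∃ w : c → ℝ, (A * B) *ᵥ w = A *ᵥ Pi.single j 1 := by
    intro j
    have : A.mulVecLin (Pi.single j 1) ∈ LinearMap.range (A * B).mulVecLin := by
      rw [heq]; exact LinearMap.mem_range_self _ _
    obtain ⟨w, hw⟩ := this
    exact ⟨w, hw⟩
  choose w hw using hx
  refine ⟨Matrix.of fun i j => w j i, ?_⟩
  ext i j
  have := congrFun (hw j) i
  rw [Matrix.mulVec_single_one] at this
  exact this.symm

/-- **CUR decomposition.** If `C = X(:,J)`, `U = X(I,J)`, `R = X(I,:)` and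
`rank U = rank X`, then `X = C U† R` for any Moore–Penrose pseudoinverse `U†` of `U`. -/
theorem cur_decomposition {m n : ℕ} (X : Matrix (Fin m) (Fin n) ℝ)
    (I : Finset (Fin m)) (J : Finset (Fin n))
    (C : Matrix (Fin m) ↥J ℝ) (U : Matrix ↥I ↥J ℝ) (R : Matrix ↥I (Fin n) ℝ)
    (hC : C = X.submatrix id (fun j : ↥J => (j : Fin n)))
    (hU : U = X.submatrix (fun i : ↥I => (i : Fin m)) (fun j : ↥J => (j : Fin n)))
    (hR : R = X.submatrix (fun i : ↥I => (i : Fin m)) id)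
    (hrank : U.rank = X.rank) :
    ∀ Y : Matrix ↥J ↥I ℝ, IsMoorePenrose U Y → X = C * Y * R := by
  intro Y hY
  obtain ⟨hY, -⟩ := hY
  let P : Matrix ↥I (Fin m) ℝ := (1 : Matrix (Fin m) (Fin m) ℝ).submatrix (fun i => (i : Fin m)) id
  let Q : Matrix (Fin n) ↥J ℝ := (1 : Matrix (Fin n) (Fin n) ℝ).submatrix id (fun j => (j : Fin n))
  have hC' : C = X * Q := by
    subst hC; ext i j; simp [Q, Matrix.mul_apply, Matrix.one_apply]
  have hR' : R = P * X := by
    subst hR; ext i j; simp [P, Matrix.mul_apply, Matrix.one_apply]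
  have hU1 : U = P * C := by
    subst hU hC; ext i j; simp [P, Matrix.mul_apply, Matrix.one_apply]
  have hU2 : U = R * Q := by
    rw [hU1, hC', hR', Matrix.mul_assoc]
  obtain ⟨W, hW⟩ := exists_right_factor X Q (by
    rw [← hC', ← hrank, hU1]; exact Matrix.rank_mul_le_right _ _)
  obtain ⟨V, hV⟩ := exists_right_factor Xᵀ Pᵀ (by
    rw [← Matrix.transpose_mul, ← hR', Matrix.rank_transpose, Matrix.rank_transpose, ← hrank, hU2]
    exact Matrix.rank_mul_le_left _ _)
  have hV' : X = Vᵀ * R := by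
    have := congrArg Matrix.transpose hV
    rwa [← Matrix.transpose_mul, ← hR', Matrix.transpose_mul, Matrix.transpose_transpose,
      Matrix.transpose_transpose] at this
  rw [← hC'] at hW
  have hRW : R = U * W := by rw [hU1, Matrix.mul_assoc, ← hW, hR']
  have hCV : C = Vᵀ * U := by rw [hU2, ← Matrix.mul_assoc, ← hV', hC']
  calc X = Vᵀ * U * W := by rw [← hCV, ← hW]
    _ = Vᵀ * (U * Y * U) * W := by rw [hY]
    _ = C * Y * R := by rw [hCV, hRW]; simp only [Matrix.mul_assoc]
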